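/- In the DFA 𝒜_n (n even, n ≥ 10), let X be a nonempty proper subset of ℤ_n and let x be the minimum element of X (with elements of ℤ_n identified with their representatives in {0,…,n−1}). Then every word w with δ(ℤ_n, w) = ℤ_n \ X has length at least x + 1. -/

import Mathlib

/-!
The state `0` has no preimage under `deltaA n`, so directly after a letter `a` the state `0` is
missing from the image. A letter `b` shifts the set of missing states by one, so it raises the
representative of any fixed missing state by at most one. Hence, as soon as the image of a word `w`
is not everything, it misses a state whose representative is less than `w.length`; this is
`exists_missing`, proved by induction on `w` from the right.
-/

/-- The two-letter alphabet of a binary DFA. -/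
inductive Letter where
  | a : Letter
  | b : Letter

/-- Left-to-right action of a word on `ZMod n`, where the letter `b` acts as `q ↦ q + 1`
(a cyclic permutation) and the letter `a` acts as the given map `δa`. -/
def act {n : ℕ} (δa : ZMod n → ZMod n) : List Letter → ZMod n → ZMod n
  | [], q => q
  | Letter.a :: w, q => act δa w (δa q)
  | Letter.b :: w, q => act δa w (q + 1)

/-- A binary circular DFA is completely reachable if every nonempty subset of states
is the image of the full state set under the action of some word. -/
def CompletelyReachable {n : ℕ} (δa : ZMod n → ZMod n) : Prop :=
  ∀ S : Set (ZMod n), S.Nonempty → ∃ w : List Letter, act δa w '' Set.univ = S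

/-- A binary circular DFA is standardized if `0` has no `δa`-preimage and `δa 0` is the
unique state with more than one `δa`-preimage. -/
def Standardized {n : ℕ} (δa : ZMod n → ZMod n) : Prop :=
  (∀ q : ZMod n, δa q ≠ 0) ∧
  ∀ p : ZMod n, 1 < {q : ZMod n | δa q = p}.ncard ↔ p = δa 0

/-- The orbit `O(𝒜) = {δa^i(0) : i ≥ 1}`. -/
def orbitSet {n : ℕ} (δa : ZMod n → ZMod n) : Set (ZMod n) :=
  {q : ZMod n | ∃ i : ℕ, 1 ≤ i ∧ δa^[i] 0 = q}

/-- The orbit subgroup `K(𝒜)`: the subgroup of `(ZMod n, +)` generated by the orbit. -/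
def orbitSubgroup {n : ℕ} (δa : ZMod n → ZMod n) : AddSubgroup (ZMod n) :=
  AddSubgroup.closure (orbitSet δa)

/-- The action of the letter `a` in the DFA `𝒜_n` (for even `n ≥ 10`):
`0 ↦ n−3 ↦ 1 ↦ n−2 ↦ n/2 ↦ n−4 ↦ n−1 ↦ n/2`, all other states are fixed. -/
def deltaA (n : ℕ) : ZMod n → ZMod n := fun q =>
  if q = 0 then ((n - 3 : ℕ) : ZMod n)
  else if q = ((n - 3 : ℕ) : ZMod n) then 1
  else if q = 1 then ((n - 2 : ℕ) : ZMod n)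
  else if q = ((n - 2 : ℕ) : ZMod n) then ((n / 2 : ℕ) : ZMod n)
  else if q = ((n / 2 : ℕ) : ZMod n) then ((n - 4 : ℕ) : ZMod n)
  else if q = ((n - 4 : ℕ) : ZMod n) then ((n - 1 : ℕ) : ZMod n)
  else if q = ((n - 1 : ℕ) : ZMod n) then ((n / 2 : ℕ) : ZMod n)
  else q

theorem act_append {n : ℕ} (f : ZMod n → ZMod n) (u v : List Letter) (q : ZMod n) :
    act f (u ++ v) q = act f v (act f u q) := by
  induction u generalizing q with
  | nil => rfl
  | cons l u ih => cases l <;> exact ih _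

theorem natCast_ne_zero_of_lt {n k : ℕ} (h0 : 0 < k) (hk : k < n) : ((k : ℕ) : ZMod n) ≠ 0 := by
  rw [Ne, ZMod.natCast_eq_zero_iff]
  exact Nat.not_dvd_of_pos_of_lt h0 hk

theorem deltaA_ne_zero {n : ℕ} (hn : 10 ≤ n) (q : ZMod n) : deltaA n q ≠ 0 := by
  have h1 : (1 : ZMod n) ≠ 0 := by
    simpa using natCast_ne_zero_of_lt (n := n) (k := 1) (by omega) (by omega)
  unfold deltaA
  split_ifs <;> first
    | assumption
    | exact natCast_ne_zero_of_lt (by omega) (by omega)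

/-- If the image of `w` is not the full state set, then it misses some state whose representative
is smaller than the length of `w`. -/
theorem exists_missing {n : ℕ} (hn : 10 ≤ n) (w : List Letter)
    (h : ∃ p, ∀ q, act (deltaA n) w q ≠ p) :
    ∃ p, (∀ q, act (deltaA n) w q ≠ p) ∧ p.val + 1 ≤ w.length := by
  have : NeZero n := ⟨by omega⟩
  induction w using List.reverseRecOn with
  | nil =>
    obtain ⟨p, hp⟩ := h
    exact absurd rfl (hp p)
  | append_singleton w l ih =>
    cases l with
    | a =>
      refine ⟨0, fun q => ?_, by simp⟩
      rw [act_append]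
      exact deltaA_ne_zero hn _
    | b =>
      have step : ∀ q, act (deltaA n) (w ++ [Letter.b]) q = act (deltaA n) w q + 1 :=
        fun q => act_append _ _ _ _
      obtain ⟨p, hp⟩ := h
      obtain ⟨r, hr, hlen⟩ := ih ⟨p - 1, fun q hq => hp q (by rw [step, hq, sub_add_cancel])⟩
      refine ⟨r + 1, fun q hq => hr q (add_right_cancel ((step q).symm.trans hq)), ?_⟩
      have hle : (r + 1).val ≤ r.val + 1 :=
        (ZMod.val_add_le r 1).trans (by
          have := ZMod.val_one'' (n := n) (by omega)
          omega)
      simp only [List.length_append, List.length_singleton]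
      omega

/-- In `𝒜_n` (`n` even, `n ≥ 10`), for a nonempty proper subset `X` with
minimum representative `x`, every reaching word of `ℤ_n \ X` has length at least
`x + 1`. -/
theorem stmt16 (n : ℕ) (hn : 10 ≤ n) (hev : Even n)
    (X : Set (ZMod n)) (hne : X.Nonempty) (hprop : X ≠ Set.univ)
    (w : List Letter)
    (hw : act (deltaA n) w '' Set.univ = Set.univ \ X) :
    sInf (ZMod.val '' X) + 1 ≤ w.length := by
  have hmem : ∀ p, p ∈ X ↔ ∀ q, act (deltaA n) w q ≠ p := by
    intro p
    have := Set.ext_iff.mp hw p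
    simp only [Set.image_univ, Set.mem_range, Set.mem_sdiff, Set.mem_univ, true_and] at this
    rw [← not_iff_not, ← this]
    push Not
    rfl
  obtain ⟨x, hx⟩ := hne
  obtain ⟨p, hp, hlen⟩ := exists_missing hn w ⟨x, (hmem x).mp hx⟩
  have := Nat.sInf_le (Set.mem_image_of_mem ZMod.val ((hmem p).mpr hp))
  omega
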